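/- arXiv:1411.6672 — 3 statements merged into one kernel-verified Lean document; each statement's English description precedes it below -/
import Mathlib

section
/- Let p₁, p₂ ∈ ℝ², let v ∈ ℝ² be a nonzero vector, and let φ : [0,1] → ℝ² be a continuous map that is injective on [0,1) and satisfies either φ(0) = p₁, φ(1) = p₂ with φ injective on all of [0,1], or φ(0) = φ(1) (a simple closed curve). Suppose the image of φ is disjoint from its translate by v, i.e., φ([0,1]) ∩ (φ([0,1]) + v) = ∅. Then for all integers k ≠ ℓ, the translates φ([0,1]) + k·v and φ([0,1]) + ℓ·v are disjoint. -/
lemma side_const (L f : ℝ → ℂ) (hL : Continuous L) (hf : Continuous f)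
    (hE : ∀ t, Complex.exp (L t) = f t) (u : ℂ) (hre : ∀ t, 0 ≤ (u * f t).re)
    (hu : u ≠ 0) (a b : ℝ) :
    L a - Complex.log (u * f a) = L b - Complex.log (u * f b) := by
  have hf0 : ∀ t, f t ≠ 0 := fun t => by rw [← hE]; exact Complex.exp_ne_zero _
  have hne : ∀ t, u * f t ≠ 0 := fun t => mul_ne_zero hu (hf0 t)
  have hsl : ∀ t, u * f t ∈ Complex.slitPlane := by
    intro t
    rw [Complex.mem_slitPlane_iff]
    by_contra hcon
    push Not at hcon
    exact hne t (Complex.ext (le_antisymm hcon.1 (hre t)) hcon.2)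
  set D : ℝ → ℂ := fun t => L t - Complex.log (u * f t) with hD
  have hDc : Continuous D := hL.sub ((continuous_const.mul hf).clog hsl)
  have hDe : ∀ t, Complex.exp (D t) = u⁻¹ := by
    intro t
    simp only [hD]
    rw [Complex.exp_sub, hE, Complex.exp_log (hne t)]
    have := hf0 t
    field_simp
  -- the difference is a continuous integer multiple of 2πi
  have key : ∀ t, ∃ n : ℤ, D t = D a + n * (2 * Real.pi * Complex.I) := fun t =>
    Complex.exp_eq_exp_iff_exists_int.1 ((hDe t).trans (hDe a).symm)
  choose n hn using key
  have hpi : (2 * Real.pi : ℝ) ≠ 0 := by positivity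
  have hnc : Continuous (fun t => (n t : ℝ)) := by
    have : (fun t => (n t : ℝ)) = fun t => (D t - D a).im / (2 * Real.pi) := by
      funext t
      rw [hn t]
      simp
    rw [this]
    exact (Complex.continuous_im.comp (hDc.sub continuous_const)).div_const _
  have hnc' : Continuous n := Int.isClosedEmbedding_coe_real.isEmbedding.continuous_iff.2 hnc
  have hc : n b = n a := PreconnectedSpace.constant inferInstance hnc'
  have h0 := hn a
  have h1 := hn b
  rw [hc, ← h0] at h1
  exact h1.symm

lemma corner (z : ℂ) (hz : z ≠ 0) (hre : 0 ≤ z.re) :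
    Complex.log (Complex.I * z) = Complex.log z + Real.pi / 2 * Complex.I := by
  have h := Complex.abs_arg_le_pi_div_two_iff.2 hre
  rw [abs_le] at h
  rw [Complex.log_mul Complex.I_ne_zero hz, Complex.log_I]
  · ring
  · rw [Complex.arg_I]
    have := Real.pi_pos
    constructor <;> linarith [h.1, h.2]

lemma crossing (x₁ y₁ x₂ y₂ : ℝ → ℝ) (hx₁ : Continuous x₁) (hy₁ : Continuous y₁)
    (hx₂ : Continuous x₂) (hy₂ : Continuous y₂) (s₀ s₁ t₀ t₁ : ℝ)
    (h1 : ∀ t, x₁ s₀ ≤ x₂ t) (h2 : ∀ t, x₂ t ≤ x₁ s₁)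
    (h3 : ∀ s, y₂ t₀ ≤ y₁ s) (h4 : ∀ s, y₁ s ≤ y₂ t₁) :
    ∃ s t, x₁ s = x₂ t ∧ y₁ s = y₂ t := by
  by_contra hcon
  push Not at hcon
  let G : ℝ × ℝ → ℂ := fun p => ⟨x₁ p.1 - x₂ p.2, y₁ p.1 - y₂ p.2⟩
  have hG : Continuous G := by
    have : G = fun p => ((x₁ p.1 - x₂ p.2 : ℝ) : ℂ) + ((y₁ p.1 - y₂ p.2 : ℝ) : ℂ) * Complex.I := by
      funext p
      apply Complex.ext <;> simp [G]
    rw [this]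
    fun_prop
  have hG0 : ∀ p, G p ≠ 0 := by
    intro p hp
    have hr : x₁ p.1 - x₂ p.2 = 0 := congrArg Complex.re hp
    have hi : y₁ p.1 - y₂ p.2 = 0 := congrArg Complex.im hp
    exact hcon p.1 p.2 (by linarith) (by linarith)
  obtain ⟨L, ⟨-, hL⟩, -⟩ := Complex.isCoveringMapOn_exp.existsUnique_continuousMap_lifts
    (⟨G, hG⟩ : C(ℝ × ℝ, ℂ)) (a₀ := (0, 0)) (e₀ := Complex.log (G (0, 0)))
    (Complex.exp_log (hG0 _)) (fun a => hG0 a)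
  have hE : ∀ p, Complex.exp (L p) = G p := fun p => congrFun hL p
  have hLc : Continuous L := L.continuous
  have A1 := side_const (fun t => L (s₀, t)) (fun t => G (s₀, t)) (by fun_prop) (by fun_prop)
    (fun t => hE _) (-1) (fun t => by simp [G, h1 t]) (by simp) t₀ t₁
  have A2 := side_const (fun t => L (s₁, t)) (fun t => G (s₁, t)) (by fun_prop) (by fun_prop)
    (fun t => hE _) 1 (fun t => by simp [G, h2 t]) (by simp) t₀ t₁
  have A3 := side_const (fun s => L (s, t₀)) (fun s => G (s, t₀)) (by fun_prop) (by fun_prop)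
    (fun t => hE _) (-Complex.I) (fun t => by simp [G, h3 t]) (by simp) s₀ s₁
  have A4 := side_const (fun s => L (s, t₁)) (fun s => G (s, t₁)) (by fun_prop) (by fun_prop)
    (fun t => hE _) Complex.I (fun t => by simp [G, h4 t]) (by simp) s₀ s₁
  have C1 := corner (-1 * G (s₀, t₀)) (by simp [hG0]) (by simp [G, h1])
  have C2 := corner (-Complex.I * G (s₁, t₀)) (by simp [hG0]) (by simp [G, h3])
  have C3 := corner (1 * G (s₁, t₁)) (by simp [hG0]) (by simp [G, h2])
  have C4 := corner (Complex.I * G (s₀, t₁)) (by simp [hG0]) (by simp [G, h4])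
  have e1 : Complex.I * (-1 * G (s₀, t₀)) = -Complex.I * G (s₀, t₀) := by ring
  have e2 : Complex.I * (-Complex.I * G (s₁, t₀)) = 1 * G (s₁, t₀) := by
    linear_combination (-G (s₁, t₀)) * Complex.I_mul_I
  have e3 : Complex.I * (1 * G (s₁, t₁)) = Complex.I * G (s₁, t₁) := by ring
  have e4 : Complex.I * (Complex.I * G (s₀, t₁)) = -1 * G (s₀, t₁) := by
    linear_combination (G (s₀, t₁)) * Complex.I_mul_I
  rw [e1] at C1
  rw [e2] at C2
  rw [e3] at C3
  rw [e4] at C4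
  have hfin : (2 * Real.pi * Complex.I : ℂ) = 0 := by
    linear_combination A1 - A2 - A3 + A4 - C1 - C2 - C3 - C4
  exact Complex.two_pi_I_ne_zero hfin

lemma additive (X Y : ℝ → ℝ) (hX : Continuous X) (hY : Continuous Y)
    (tL tR tB tT : ℝ) (hL : ∀ t, X tL ≤ X t) (hR : ∀ t, X t ≤ X tR)
    (hB : ∀ t, Y tB ≤ Y t) (hT : ∀ t, Y t ≤ Y tT) (a b : ℝ) (ha : 0 < a) (hb : 0 < b)
    (Ha : ∀ s t, X s = X t + a → Y s ≠ Y t) (Hb : ∀ s t, X s = X t + b → Y s ≠ Y t) :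
    ∀ s t, X s = X t + (a + b) → Y s ≠ Y t := by
  intro s₁ s₂ hXs hYs
  let x₁ : ℝ → ℝ := fun r => if r ≤ 0 then X (s₁ - r * (tL - s₁)) - b
    else X (s₂ + r * (tR - s₂)) + a
  let y₁ : ℝ → ℝ := fun r => if r ≤ 0 then Y (s₁ - r * (tL - s₁))
    else Y (s₂ + r * (tR - s₂))
  have hx₁ : Continuous x₁ := by
    refine Continuous.if_le (by fun_prop) (by fun_prop) continuous_id continuous_const ?_
    intro r hr
    subst hr
    simp only [zero_mul, sub_zero, add_zero]
    linarith
  have hy₁ : Continuous y₁ := by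
    refine Continuous.if_le (by fun_prop) (by fun_prop) continuous_id continuous_const ?_
    intro r hr
    subst hr
    simpa using hYs
  obtain ⟨r, t, hx, hy⟩ := crossing x₁ y₁ X Y hx₁ hy₁ hX hY (-1) 1 tB tT
    (fun t => by
      have := hL t
      simp only [x₁]
      rw [if_pos (by norm_num)]
      ring_nf
      linarith)
    (fun t => by
      have := hR t
      simp only [x₁]
      rw [if_neg (by norm_num)]
      ring_nf
      linarith)
    (fun s => by
      simp only [y₁]
      split_ifs
      · exact hB _
      · exact hB _)
    (fun s => by
      simp only [y₁]
      split_ifs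
      · exact hT _
      · exact hT _)
  by_cases hr : r ≤ 0
  · simp only [x₁, y₁, if_pos hr] at hx hy
    exact Hb _ _ (by linarith) hy
  · simp only [x₁, y₁, if_neg hr] at hx hy
    exact Ha t _ hx.symm hy.symm


/-- Translate of a planar set by a vector. -/
def setTranslate (A : Set (ℝ × ℝ)) (v : ℝ × ℝ) : Set (ℝ × ℝ) := (· + v) '' A

/-- If a simple curve (possibly closed) is disjoint from its setTranslate by a nonzero
vector `v`, then all its translates by distinct integer multiples of `v` are
mutually disjoint. -/
theorem curve_translates_disjoint (p₁ p₂ v : ℝ × ℝ) (hv : v ≠ 0)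
    (φ : ℝ → ℝ × ℝ)
    (hcont : ContinuousOn φ (Set.Icc 0 1))
    (hinj : Set.InjOn φ (Set.Ico 0 1))
    (hends : (Set.InjOn φ (Set.Icc 0 1) ∧ φ 0 = p₁ ∧ φ 1 = p₂) ∨ φ 0 = φ 1)
    (hdisj : (φ '' Set.Icc 0 1) ∩ setTranslate (φ '' Set.Icc 0 1) v = ∅) :
    ∀ k ℓ : ℤ, k ≠ ℓ →
      setTranslate (φ '' Set.Icc 0 1) ((k : ℝ) • v) ∩
        setTranslate (φ '' Set.Icc 0 1) ((ℓ : ℝ) • v) = ∅ := by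

  have hc : 0 < v.1 ^ 2 + v.2 ^ 2 := by
    rcases eq_or_ne v.1 0 with h | h
    · have : v.2 ≠ 0 := fun h2 => hv (Prod.ext h h2)
      positivity
    · positivity
  set c := v.1 ^ 2 + v.2 ^ 2 with hcdef
  -- a globally defined continuous parametrization
  let g : ℝ → ℝ × ℝ := Set.IccExtend (zero_le_one (α := ℝ)) ((Set.Icc (0:ℝ) 1).domRestrict φ)
  have hg : Continuous g := (continuousOn_iff_continuous_domRestrict.1 hcont).Icc_extend'
  have hgmem : ∀ t, g t ∈ φ '' Set.Icc 0 1 := fun t =>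
    ⟨_, (Set.projIcc (0:ℝ) 1 zero_le_one t).2, rfl⟩
  have hgφ : ∀ t ∈ Set.Icc (0:ℝ) 1, g t = φ t := fun t ht => by
    simp only [g]
    rw [Set.IccExtend_of_mem _ _ ht]
    rfl
  have ext : ∀ f : ℝ × ℝ → ℝ, Continuous f →
      (∃ a, ∀ t, f (g a) ≤ f (g t)) ∧ (∃ b, ∀ t, f (g t) ≤ f (g b)) := by
    intro f hf
    have hK : IsCompact (φ '' Set.Icc 0 1) := isCompact_Icc.image_of_continuousOn hcont
    have hne : (φ '' Set.Icc 0 1).Nonempty := ⟨_, hgmem 0⟩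
    constructor
    · obtain ⟨_, ⟨a, ha, rfl⟩, h⟩ := hK.exists_isMinOn hne hf.continuousOn
      exact ⟨a, fun t => by rw [hgφ a ha]; exact h (hgmem t)⟩
    · obtain ⟨_, ⟨a, ha, rfl⟩, h⟩ := hK.exists_isMaxOn hne hf.continuousOn
      exact ⟨a, fun t => by rw [hgφ a ha]; exact h (hgmem t)⟩
  let fX : ℝ × ℝ → ℝ := fun p => p.1 * v.1 + p.2 * v.2
  let fY : ℝ × ℝ → ℝ := fun p => p.2 * v.1 - p.1 * v.2
  have hfX : Continuous fX := by fun_prop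
  have hfY : Continuous fY := by fun_prop
  obtain ⟨⟨tL, hL⟩, ⟨tR, hR⟩⟩ := ext fX hfX
  obtain ⟨⟨tB, hB⟩, ⟨tT, hT⟩⟩ := ext fY hfY
  have base : ∀ s t, fX (g s) = fX (g t) + c → fY (g s) ≠ fY (g t) := by
    intro s t hX hY
    have hst : g s = g t + v := by
      simp only [fX, fY] at hX hY
      have i1 : c * ((g s).1 - ((g t).1 + v.1)) = 0 := by
        rw [hcdef] at hX ⊢
        linear_combination v.1 * hX - v.2 * hY
      have i2 : c * ((g s).2 - ((g t).2 + v.2)) = 0 := by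
        rw [hcdef] at hX ⊢
        linear_combination v.2 * hX + v.1 * hY
      have j1 := (mul_eq_zero.1 i1).resolve_left hc.ne'
      have j2 := (mul_eq_zero.1 i2).resolve_left hc.ne'
      exact Prod.ext (by simp only [Prod.fst_add]; linarith)
        (by simp only [Prod.snd_add]; linarith)
    have : g s ∈ (φ '' Set.Icc 0 1) ∩ setTranslate (φ '' Set.Icc 0 1) v :=
      ⟨hgmem s, g t, hgmem t, hst.symm⟩
    rw [hdisj] at this
    exact this
  have main : ∀ n : ℕ, ∀ s t, fX (g s) = fX (g t) + (n + 1 : ℝ) * c → fY (g s) ≠ fY (g t) := by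
    intro n
    induction n with
    | zero => intro s t h; exact base s t (by simpa using h)
    | succ n ih =>
      intro s t h
      refine additive (fun t => fX (g t)) (fun t => fY (g t)) (hfX.comp hg) (hfY.comp hg)
        tL tR tB tT hL hR hB hT ((n + 1 : ℝ) * c) c (by positivity) hc ih base s t ?_
      rw [h]
      push_cast
      ring
  have gen : ∀ k ℓ : ℤ, k < ℓ → ∀ x ∈ φ '' Set.Icc 0 1, ∀ y ∈ φ '' Set.Icc 0 1,
      x + (k : ℝ) • v ≠ y + (ℓ : ℝ) • v := by
    rintro k ℓ hkl _ ⟨s, hs, rfl⟩ _ ⟨t, ht, rfl⟩ h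
    rw [← hgφ s hs, ← hgφ t ht] at h
    obtain ⟨n, hn⟩ := Int.le.dest (Int.add_one_le_of_lt hkl)
    have hn' : (ℓ : ℝ) = k + 1 + n := by rw [← hn]; push_cast; ring
    have h1 := congrArg Prod.fst h
    have h2 := congrArg Prod.snd h
    simp only [Prod.fst_add, Prod.snd_add, Prod.smul_fst, Prod.smul_snd, smul_eq_mul] at h1 h2
    rw [hn'] at h1 h2
    refine main n s t ?_ ?_
    · simp only [fX]
      rw [hcdef]
      linear_combination v.1 * h1 + v.2 * h2
    · simp only [fY]
      linear_combination v.1 * h2 - v.2 * h1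
  intro k ℓ hkl
  rw [Set.eq_empty_iff_forall_notMem]
  rintro _ ⟨⟨x, hx, rfl⟩, ⟨y, hy, hxy⟩⟩
  simp only at hxy
  rcases lt_or_gt_of_ne hkl with h | h
  · exact gen k ℓ h x hx y hy hxy.symm
  · exact gen ℓ k h y hy x hx hxy
end

section
/- Let n ≥ 1 be an integer, p ∈ ℝ² a point, and v ∈ ℝ² a nonzero vector. Let φ : [0,1] → ℝ² be a continuous injective map with φ(0) = p and φ(1) = p + n·v. Then the image of φ intersects its translate by v, i.e., φ([0,1]) ∩ (φ([0,1]) + v) ≠ ∅. -/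
open Real in
lemma cit_S1 (θ : ℝ → ℝ) (hc : Continuous θ) (h : ∀ t, 0 ≤ sin (θ t)) (t0 : ℝ) (h0 : θ t0 = π)
    (t : ℝ) : 0 ≤ θ t ∧ θ t ≤ π := by
  have hp := pi_pos
  constructor
  · by_contra! hlt
    obtain ⟨u, hu⟩ := mem_range_of_exists_le_of_exists_ge (c := max (θ t) (-(π/2))) hc
      ⟨t, le_max_left _ _⟩ ⟨t0, by rw [h0]; exact max_le (by linarith) (by linarith)⟩
    have h1 := h u
    rw [hu] at h1
    have := sin_neg_of_neg_of_neg_pi_lt (x := max (θ t) (-(π/2)))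
      (max_lt hlt (by linarith)) (lt_max_of_lt_right (by linarith))
    linarith
  · by_contra! hlt
    obtain ⟨u, hu⟩ := mem_range_of_exists_le_of_exists_ge (c := min (θ t) (π+π/2)) hc
      ⟨t0, by rw [h0]; exact le_min (by linarith) (by linarith)⟩ ⟨t, min_le_left _ _⟩
    have h1 := h u
    rw [hu] at h1
    have := sin_pos_of_pos_of_lt_pi (x := min (θ t) (π+π/2) - π)
      (by have := lt_min hlt (show π < π + π/2 by linarith); linarith)
      (by have := min_le_right (θ t) (π+π/2); linarith)
    rw [sin_sub_pi] at this
    linarith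

open Real in
lemma cit_S2 (θ : ℝ → ℝ) (hc : Continuous θ) (h : ∀ t, sin (θ t) ≤ 0) (t0 : ℝ) (h0 : θ t0 = π)
    (t : ℝ) : π ≤ θ t ∧ θ t ≤ 2 * π := by
  have := cit_S1 (fun t => 2 * π - θ t) (by fun_prop)
    (fun t => by rw [sin_two_pi_sub]; linarith [h t]) t0 (by simp only [h0]; ring) t
  constructor <;> linarith [this.1, this.2]

lemma cit_sin_nonneg {z w : ℂ} (h : Complex.exp z = w) (hw : 0 ≤ w.im) : 0 ≤ Real.sin z.im := by
  rw [← h, Complex.exp_im] at hw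
  exact nonneg_of_mul_nonneg_right hw (Real.exp_pos _)

lemma cit_sin_nonpos {z w : ℂ} (h : Complex.exp z = w) (hw : w.im ≤ 0) : Real.sin z.im ≤ 0 := by
  rw [← h, Complex.exp_im] at hw
  exact nonpos_of_mul_nonpos_right hw (Real.exp_pos _)

open Real in
lemma cit_key (ψ : ℝ → ℂ) (hψ : Continuous ψ) (s0 s1 : ℝ) (hs0 : ∀ t, (ψ t).im ≤ (ψ s0).im)
    (hs1 : ∀ t, (ψ s1).im ≤ (ψ t).im) (a : ℝ) (ha : 0 < a) (hd : ∀ s t, ψ s - ψ t ≠ a) :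
    ∃ g : ℝ × ℝ → ℂ, Continuous g ∧ (∀ s t, Complex.exp (g (s, t)) = ψ s - ψ t - a) ∧
      ∀ t, (0 ≤ (g (s0, t)).im ∧ (g (s0, t)).im ≤ π) ∧
        (π ≤ (g (s1, t)).im ∧ (g (s1, t)).im ≤ 2 * π) ∧
        (π ≤ (g (t, s0)).im ∧ (g (t, s0)).im ≤ 2 * π) ∧
        (0 ≤ (g (t, s1)).im ∧ (g (t, s1)).im ≤ π) := by
  have hlp : LocallyPathConnectedSpace (ℝ × ℝ) := inferInstance
  obtain ⟨g, ⟨hg0, hg⟩, -⟩ := Complex.isCoveringMapOn_exp.existsUnique_continuousMap_lifts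
    (A := ℝ × ℝ) ⟨fun x => ψ x.1 - ψ x.2 - a, by fun_prop⟩ (a₀ := (0, 0))
    (e₀ := Real.log a + π * Complex.I)
    (by
      rw [Complex.exp_add, Complex.exp_pi_mul_I, ← Complex.ofReal_exp, Real.exp_log ha]; simp)
    (fun x => by simpa [sub_eq_zero] using hd x.1 x.2)
  have hE : ∀ s t, Complex.exp (g (s, t)) = ψ s - ψ t - a := fun s t => congrFun hg (s, t)
  have hgc : Continuous g := g.continuous
  have h00 : (g (0, 0)).im = π := by rw [hg0]; simp
  have hdiag : ∀ t, (g (t, t)).im = π := by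
    intro t
    have hc : Continuous fun t : ℝ => (g (t, t)).im := by fun_prop
    apply le_antisymm
    · exact (cit_S1 _ hc (fun t => cit_sin_nonneg (hE t t) (by simp)) 0 h00 t).2
    · exact (cit_S2 _ hc (fun t => cit_sin_nonpos (hE t t) (by simp)) 0 h00 t).1
  refine ⟨g, hgc, hE, fun t => ⟨?_, ?_, ?_, ?_⟩⟩
  · exact cit_S1 (fun t => (g (s0, t)).im) (by fun_prop)
      (fun t => cit_sin_nonneg (hE _ t) (by simpa using hs0 t)) s0 (hdiag _) t
  · exact cit_S2 (fun t => (g (s1, t)).im) (by fun_prop)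
      (fun t => cit_sin_nonpos (hE _ t) (by simpa using hs1 t)) s1 (hdiag _) t
  · exact cit_S2 (fun t => (g (t, s0)).im) (by fun_prop)
      (fun t => cit_sin_nonpos (hE t _) (by simpa using hs0 t)) s0 (hdiag _) t
  · exact cit_S1 (fun t => (g (t, s1)).im) (by fun_prop)
      (fun t => cit_sin_nonneg (hE t _) (by simpa using hs1 t)) s1 (hdiag _) t

open Real in
lemma cit_add (ψ : ℝ → ℂ) (hψ : Continuous ψ) (s0 s1 : ℝ) (hs0 : ∀ t, (ψ t).im ≤ (ψ s0).im)
    (hs1 : ∀ t, (ψ s1).im ≤ (ψ t).im) (a b : ℝ) (ha : 0 < a) (hb : 0 < b)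
    (hda : ∀ s t, ψ s - ψ t ≠ a) (hdb : ∀ s t, ψ s - ψ t ≠ b) (s t : ℝ) :
    ψ s - ψ t ≠ ((a + b : ℝ) : ℂ) := by
  intro hst
  obtain ⟨f, hfc, hf, hfb⟩ := cit_key ψ hψ s0 s1 hs0 hs1 a ha hda
  obtain ⟨g, hgc, hg, hgb⟩ := cit_key ψ hψ s0 s1 hs0 hs1 b hb hdb
  have hc : Continuous fun u : ℝ => (f (s, u) - g (u, t)).im := by fun_prop
  obtain ⟨u, hu⟩ := mem_range_of_exists_le_of_exists_ge (c := 0) hc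
      ⟨s1, by simp only [Complex.sub_im]; linarith [(hfb s).2.2.2.2, (hgb t).2.1.1]⟩
      ⟨s0, by simp only [Complex.sub_im]; linarith [(hfb s).2.2.1.1, (hgb t).1.2]⟩
  have h1 : Complex.exp (f (s, u) - g (u, t)) = -1 := by
    rw [Complex.exp_sub, hf, hg, div_eq_iff (by rw [sub_ne_zero]; exact hdb u t)]
    push_cast at hst
    linear_combination hst
  have h2 := congrArg Complex.re h1
  simp only at hu
  rw [Complex.exp_re, hu, Real.cos_zero] at h2
  have := Real.exp_pos (f (s, u) - g (u, t)).re
  simp only [mul_one, Complex.neg_re, Complex.one_re] at h2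
  linarith

/-- Any simple curve from `p` to `p + n • v`, with `n ≥ 1` an integer and `v` a
nonzero vector, intersects its setTranslate by `v`. -/
theorem curve_intersects_translate (n : ℕ) (hn : 1 ≤ n) (p v : ℝ × ℝ) (hv : v ≠ 0)
    (φ : ℝ → ℝ × ℝ)
    (hcont : ContinuousOn φ (Set.Icc 0 1))
    (hinj : Set.InjOn φ (Set.Icc 0 1))
    (h0 : φ 0 = p) (h1 : φ 1 = p + (n : ℝ) • v) :
    ((φ '' Set.Icc 0 1) ∩ setTranslate (φ '' Set.Icc 0 1) v).Nonempty := by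
  by_contra hne
  set A : ℂ := ⟨v.1, v.2⟩ with hA
  have hA0 : A ≠ 0 := by
    intro h
    apply hv
    ext
    · exact congrArg Complex.re h
    · exact congrArg Complex.im h
  have hc1 : Continuous (Set.IccExtend (zero_le_one (α := ℝ)) ((Set.Icc 0 1).domRestrict φ)) :=
    (continuousOn_iff_continuous_domRestrict.1 hcont).Icc_extend'
  set Φ := Set.IccExtend (zero_le_one (α := ℝ)) ((Set.Icc 0 1).domRestrict φ) with hΦ
  have hmem : ∀ t, ∃ u ∈ Set.Icc (0:ℝ) 1, Φ t = φ u ∧ Φ u = φ u := by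
    intro t
    refine ⟨Set.projIcc 0 1 zero_le_one t, Subtype.prop _, rfl, ?_⟩
    simp [hΦ, Set.IccExtend]
  have hΦm : ∀ u ∈ Set.Icc (0:ℝ) 1, Φ u = φ u := by
    intro u hu
    rw [hΦ, Set.IccExtend_of_mem _ _ hu]; rfl
  set ψ : ℝ → ℂ := fun t => Complex.equivRealProdCLM.symm (Φ t) / A with hψ
  have hψc : Continuous ψ := by
    have := Complex.equivRealProdCLM.symm.continuous
    exact (this.comp hc1).div_const _
  have hsub : ∀ s t (r : ℝ), ψ s - ψ t = r ↔ Φ s = Φ t + r • v := by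
    intro s t r
    rw [hψ]
    simp only
    rw [← sub_div, div_eq_iff hA0]
    simp [Complex.ext_iff, Prod.ext_iff, hA, sub_eq_iff_eq_add']
  have hcI : ContinuousOn (fun t => (ψ t).im) (Set.Icc 0 1) :=
    (Complex.continuous_im.comp hψc).continuousOn
  obtain ⟨s0, -, hs0⟩ := isCompact_Icc.exists_isMaxOn (Set.nonempty_Icc.2 zero_le_one) hcI
  obtain ⟨s1, -, hs1⟩ := isCompact_Icc.exists_isMinOn (Set.nonempty_Icc.2 zero_le_one) hcI
  have hψm : ∀ t, ∃ u ∈ Set.Icc (0:ℝ) 1, ψ t = ψ u := by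
    intro t
    obtain ⟨u, hu, h, h'⟩ := hmem t
    exact ⟨u, hu, by simp only [hψ, h, h']⟩
  have hs0' : ∀ t, (ψ t).im ≤ (ψ s0).im := by
    intro t
    obtain ⟨u, hu, h⟩ := hψm t
    rw [h]; exact hs0 hu
  have hs1' : ∀ t, (ψ s1).im ≤ (ψ t).im := by
    intro t
    obtain ⟨u, hu, h⟩ := hψm t
    rw [h]; exact hs1 hu
  have hd1 : ∀ s t, ψ s - ψ t ≠ ((1 : ℝ) : ℂ) := by
    intro s t h
    rw [hsub, one_smul] at h
    obtain ⟨a, ha, h2, -⟩ := hmem s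
    obtain ⟨b, hb, h3, -⟩ := hmem t
    rw [h2, h3] at h
    exact hne ⟨φ a, ⟨a, ha, rfl⟩, φ b, ⟨b, hb, rfl⟩, h.symm⟩
  have hdn : ∀ k : ℕ, 1 ≤ k → ∀ s t, ψ s - ψ t ≠ ((k : ℝ) : ℂ) := by
    intro k hk
    induction k, hk using Nat.le_induction with
    | base => simpa using hd1
    | succ k hk ih =>
      intro s t
      have := cit_add ψ hψc s0 s1 hs0' hs1' k 1 (by exact_mod_cast hk) one_pos ih hd1 s t
      rwa [Nat.cast_succ]
  apply hdn n hn 1 0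
  rw [hsub, hΦm 1 (by simp), hΦm 0 (by simp), h0, h1]
end

section
/- Let p ∈ ℝ², let v ∈ ℝ² be a nonzero vector, and let x ∈ ℝ be a non-integer real number with |x| > 1. Then there exists a continuous injective map φ : [0,1] → ℝ² with φ(0) = p and φ(1) = p + x·v such that the image of φ is disjoint from its translate by v, i.e., φ([0,1]) ∩ (φ([0,1]) + v) = ∅. -/
theorem indep_aux (v : ℝ × ℝ) (hv : v ≠ 0) (a b : ℝ)
    (h1 : a * v.1 - b * v.2 = 0) (h2 : a * v.2 + b * v.1 = 0) : a = 0 ∧ b = 0 := by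
  have hn : v.1 ^ 2 + v.2 ^ 2 ≠ 0 := by
    intro h
    apply hv
    have e1 : v.1 = 0 := by nlinarith [sq_nonneg v.1, sq_nonneg v.2]
    have e2 : v.2 = 0 := by nlinarith [sq_nonneg v.1, sq_nonneg v.2]
    exact Prod.ext e1 e2
  constructor
  · have : a * (v.1 ^ 2 + v.2 ^ 2) = 0 := by linear_combination v.1 * h1 + v.2 * h2
    exact (mul_eq_zero.mp this).resolve_right hn
  · have : b * (v.1 ^ 2 + v.2 ^ 2) = 0 := by linear_combination v.1 * h2 - v.2 * h1
    exact (mul_eq_zero.mp this).resolve_right hn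

/-- For every non-integer real `x` with `|x| > 1` and every nonzero vector `v`,
there is a simple curve from `p` to `p + x • v` whose image is disjoint from its
setTranslate by `v`. -/
theorem exists_curve_avoiding_translate (p v : ℝ × ℝ) (hv : v ≠ 0)
    (x : ℝ) (hx : ∀ m : ℤ, x ≠ (m : ℝ)) (hx1 : 1 < |x|) :
    ∃ φ : ℝ → ℝ × ℝ,
      ContinuousOn φ (Set.Icc 0 1) ∧
      Set.InjOn φ (Set.Icc 0 1) ∧
      φ 0 = p ∧ φ 1 = p + x • v ∧
      (φ '' Set.Icc 0 1) ∩ setTranslate (φ '' Set.Icc 0 1) v = ∅ := by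
  have hx0 : x ≠ 0 := by simpa using hx 0
  have hs : Real.sin (x * Real.pi) ≠ 0 := by
    intro h
    obtain ⟨n, hn⟩ := Real.sin_eq_zero_iff.mp h
    exact hx n (mul_right_cancel₀ Real.pi_ne_zero hn).symm
  obtain ⟨g, hg⟩ : ∃ g : ℝ → ℝ, g = fun s =>
    Real.sin (x * s * Real.pi) ^ 2 - s * Real.sin (x * Real.pi) ^ 2 := ⟨_, rfl⟩
  have hgc : Continuous g := by rw [hg]; fun_prop
  refine ⟨fun s => (p.1 + (x * s * v.1 - g s * v.2), p.2 + (x * s * v.2 + g s * v.1)),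
    ?_, ?_, ?_, ?_, ?_⟩
  · apply Continuous.continuousOn
    fun_prop
  · intro s _ t _ h
    simp only [Prod.mk.injEq] at h
    obtain ⟨h1, h2⟩ := h
    have := (indep_aux v hv (x * s - x * t) (g s - g t)
      (by linear_combination h1) (by linear_combination h2)).1
    exact mul_left_cancel₀ hx0 (sub_eq_zero.mp this)
  · simp [hg]
  · ext <;> simp [hg]
  · rw [Set.eq_empty_iff_forall_notMem]
    rintro _ ⟨⟨s, _, rfl⟩, ⟨_, ⟨t, _, rfl⟩, h⟩⟩
    simp only [Prod.ext_iff, Prod.fst_add, Prod.snd_add] at h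
    obtain ⟨h1, h2⟩ := h
    obtain ⟨ha, hb⟩ := indep_aux v hv (x * s - x * t - 1) (g s - g t)
      (by linear_combination -h1) (by linear_combination -h2)
    have e : x * s * Real.pi = x * t * Real.pi + Real.pi := by
      linear_combination Real.pi * ha
    rw [hg] at hb
    simp only [e, Real.sin_add_pi] at hb
    have h3 : (s - t) * Real.sin (x * Real.pi) ^ 2 = 0 := by linear_combination -hb
    have h4 : s - t = 0 := (mul_eq_zero.mp h3).resolve_right (pow_ne_zero 2 hs)
    have : (1 : ℝ) = 0 := by linear_combination -ha + x * h4
    exact one_ne_zero this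
end
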